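/- Let A be a unital C*-algebra, n,m ≥ 2, Θ = (q_{ij}) with |q_{ij}| = 1, and let s_1,…,s_n, t_1,…,t_m ∈ A satisfy the O_n⊗_Θ O_m relations. Assume moreover that: (1) A equals the topological closure of the *-subalgebra generated by {s_1,…,s_n, t_1,…,t_m}; and (2) for every pair (ζ,ξ) of complex numbers with |ζ| = |ξ| = 1 there exists a *-algebra automorphism ρ_{ζ,ξ} of A with ρ_{ζ,ξ}(s_i) = ζ s_i for all i and ρ_{ζ,ξ}(t_j) = ξ t_j for all j (the gauge action). Then A is purely infinite and simple: for every x ∈ A with x ≠ 0 there exist a, b ∈ A such that a x b = 1. -/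

import Mathlib

open scoped BigOperators

/-!
Averaging over the torus with respect to Haar measure gives a positive, faithful, contractive
projection `E` of `A` onto the fixed points of the gauge action. If `p` is a self-adjoint
*-polynomial in the generators, then `E p` lies in a full matrix algebra whose matrix units are the
`(s_μ t_ν) (s_μ' t_ν')*` with all words of one length `k`. An eigenvector of `E p` for an eigenvalue
`c` of modulus `‖E p‖` provides an isometry `v` in the span of the `s_μ t_ν` with `v* (E p) v = c`.
For large `l` the isometry `w = (s_i^l s_i') (t_j^l t_j')`, `i ≠ i'`, `j ≠ j'`, compresses `v* p v`
to a scalar. A scalar is fixed by `E`, and `E` passes through compression by the gauge-homogeneous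
elements `v` and `w`, so that scalar is `c`, and `u = v w` satisfies `u* p u = c`. If `p` is close
enough to `x* x`, then `|c| = ‖E p‖` is larger than `‖x* x - p‖`, whence `u* x* x u` is invertible.
-/

section CuntzFamily

variable {ι κ : Type*} [DecidableEq ι] [DecidableEq κ] [Fintype ι] [Fintype κ]
  {A : Type*} [Ring A] [StarRing A] {S : ι → A} {T : κ → A}

/-- A finite family of isometries with orthogonal ranges summing to `1`, that is, a unital
representation of the Cuntz algebra (or, for a family of one, a unitary). -/
structure IsCuntzFamily (S : ι → A) : Prop where
  star_mul_eq_ite (i j : ι) : star (S i) * S j = if i = j then 1 else 0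
  sum_mul_star : ∑ i, S i * star (S i) = 1

namespace IsCuntzFamily

theorem star_mul_self (hS : IsCuntzFamily S) (i : ι) : star (S i) * S i = 1 := by
  rw [hS.star_mul_eq_ite, if_pos rfl]

theorem star_mul_of_ne (hS : IsCuntzFamily S) {i j : ι} (h : i ≠ j) : star (S i) * S j = 0 := by
  rw [hS.star_mul_eq_ite, if_neg h]

theorem prod (hS : IsCuntzFamily S) (hT : IsCuntzFamily T) :
    IsCuntzFamily fun p : ι × κ => S p.1 * T p.2 where
  star_mul_eq_ite := by
    rintro ⟨i, k⟩ ⟨j, l⟩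
    have hassoc : star (S i * T k) * (S j * T l) = star (T k) * (star (S i) * S j) * T l := by
      simp only [star_mul, mul_assoc]
    rw [hassoc]
    rcases eq_or_ne i j with rfl | hij
    · simp [hS.star_mul_self, hT.star_mul_eq_ite]
    · simp [hS.star_mul_of_ne hij, hij]
  sum_mul_star :=
    calc ∑ p : ι × κ, S p.1 * T p.2 * star (S p.1 * T p.2)
      _ = ∑ i, S i * (∑ k, T k * star (T k)) * star (S i) := by
        simp only [Fintype.sum_prod_type, star_mul, Finset.mul_sum, Finset.sum_mul,
          mul_assoc]
      _ = 1 := by simp only [hT.sum_mul_star, mul_one, hS.sum_mul_star]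

theorem comp_equiv (hS : IsCuntzFamily S) (e : κ ≃ ι) : IsCuntzFamily (S ∘ e) where
  star_mul_eq_ite k l := by simp [hS.star_mul_eq_ite]
  sum_mul_star := (e.sum_comp fun i => S i * star (S i)).trans hS.sum_mul_star

end IsCuntzFamily

end CuntzFamily

section WordProduct

variable {ι M : Type*} [Monoid M] (s : ι → M)

/-- The product `s_μ = s_{μ₁} ⋯ s_{μₖ}` of the letters of a word `μ = μ₁ ⋯ μₖ`. -/
def wordProduct (μ : List ι) : M := (μ.map s).prod

@[simp]
theorem wordProduct_nil : wordProduct s [] = 1 := rfl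

theorem wordProduct_cons (i : ι) (μ : List ι) :
    wordProduct s (i :: μ) = s i * wordProduct s μ := by
  simp [wordProduct]

theorem wordProduct_mem {N : Submonoid M} (hs : ∀ i, s i ∈ N) (μ : List ι) :
    wordProduct s μ ∈ N := by
  refine N.list_prod_mem fun x hx => ?_
  obtain ⟨i, -, rfl⟩ := List.mem_map.mp hx
  exact hs i

theorem wordProduct_append (μ ν : List ι) :
    wordProduct s (μ ++ ν) = wordProduct s μ * wordProduct s ν := by
  simp [wordProduct]

/-- The products of words of length `k`, with words encoded as functions on `Fin k`. -/
def wordOfLength (k : ℕ) (w : Fin k → ι) : M := wordProduct s (List.ofFn w)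

end WordProduct

theorem exists_ofFn_eq {ι : Type*} {μ : List ι} {k : ℕ} (h : μ.length = k) :
    ∃ w : Fin k → ι, List.ofFn w = μ := by
  subst h
  exact ⟨μ.get, List.ofFn_get μ⟩

theorem IsCuntzFamily.words {ι A : Type*} [DecidableEq ι] [Fintype ι] [Ring A] [StarRing A]
    {s : ι → A} (hs : IsCuntzFamily s) (k : ℕ) :
    IsCuntzFamily (wordOfLength s k) := by
  induction k with
  | zero => exact ⟨fun v w => by simp [wordOfLength, Subsingleton.elim v w], by simp [wordOfLength]⟩
  | succ k ih =>
    convert (hs.prod ih).comp_equiv (Fin.consEquiv fun _ => ι).symm using 1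
    ext w
    simp [wordOfLength, List.ofFn_succ, wordProduct_cons, Fin.tail_def]

section MatrixUnits

variable (R : Type*) {ι A : Type*} [CommRing R] [Ring A] [StarRing A] [Algebra R A]

/-- The linear span of the matrix units `S i * star (S j)`. -/
def matrixUnitSpan (S : ι → A) : Submodule R A :=
  Submodule.span R (Set.range fun p : ι × ι => S p.1 * star (S p.2))

variable {R} {S : ι → A}

theorem mul_star_mem_matrixUnitSpan (i j : ι) : S i * star (S j) ∈ matrixUnitSpan R S :=
  Submodule.subset_span ⟨(i, j), rfl⟩

variable [DecidableEq ι] [Fintype ι]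

theorem IsCuntzFamily.sum_smul_mul (hS : IsCuntzFamily S) (M : Matrix ι ι R) (k : ι) :
    (∑ i, ∑ j, M i j • (S i * star (S j))) * S k = ∑ i, M i k • S i := by
  simp only [Finset.sum_mul, smul_mul_assoc, mul_assoc, hS.star_mul_eq_ite, mul_ite, mul_one,
    mul_zero, smul_ite, smul_zero, Finset.sum_ite_eq', Finset.mem_univ, if_true]

/-- The unital homomorphism from the full matrix algebra onto the span of the matrix units of a
Cuntz family. -/
def IsCuntzFamily.matrixHom (hS : IsCuntzFamily S) : Matrix ι ι R →ₐ[R] A :=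
  AlgHom.ofLinearMap
    { toFun := fun M => ∑ i, ∑ j, M i j • (S i * star (S j))
      map_add' := fun M N => by simp [add_smul, Finset.sum_add_distrib]
      map_smul' := fun c M => by simp [Finset.smul_sum, mul_smul] }
    (by simp [Matrix.one_apply, hS.sum_mul_star])
    fun M N =>
      calc ∑ i, ∑ j, (M * N) i j • (S i * star (S j))
        _ = ∑ k, ∑ j, N k j • ((∑ i, M i k • S i) * star (S j)) := by
          simp only [Matrix.mul_apply, Finset.sum_smul, Finset.sum_mul, Finset.smul_sum,
            smul_mul_assoc, smul_smul, mul_comm (N _ _)]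
          rw [Finset.sum_comm_cycle]
          exact Finset.sum_congr rfl fun k _ => Finset.sum_comm
        _ = (∑ i, ∑ j, M i j • (S i * star (S j))) * ∑ k, ∑ j, N k j • (S k * star (S j)) := by
          simp only [Finset.mul_sum, mul_smul_comm, ← mul_assoc, hS.sum_smul_mul]

theorem IsCuntzFamily.matrixHom_apply (hS : IsCuntzFamily S) (M : Matrix ι ι R) :
    hS.matrixHom M = ∑ i, ∑ j, M i j • (S i * star (S j)) := rfl

theorem IsCuntzFamily.exists_matrixHom_eq (hS : IsCuntzFamily S) {p : A}
    (hp : p ∈ matrixUnitSpan R S) : ∃ M : Matrix ι ι R, hS.matrixHom M = p := by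
  suffices h : matrixUnitSpan R S ≤ LinearMap.range hS.matrixHom.toLinearMap from h hp
  refine Submodule.span_le.mpr ?_
  rintro _ ⟨⟨i, j⟩, rfl⟩
  exact ⟨Matrix.single i j 1, by simp [hS.matrixHom_apply, Matrix.single_apply, ite_and]⟩

theorem IsCuntzFamily.matrixHom_mul_linearCombination (hS : IsCuntzFamily S) (M : Matrix ι ι R)
    (e : ι → R) : hS.matrixHom M * Fintype.linearCombination R S e =
      Fintype.linearCombination R S (M.mulVec e) := by
  simp only [Fintype.linearCombination_apply, Finset.mul_sum, mul_smul_comm, hS.matrixHom_apply,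
    hS.sum_smul_mul, Matrix.mulVec, dotProduct, Finset.sum_smul, Finset.smul_sum, smul_smul,
    mul_comm (M _ _)]
  exact Finset.sum_comm

theorem IsCuntzFamily.star_linearCombination_mul [StarRing R] [StarModule R A]
    (hS : IsCuntzFamily S) (e f : ι → R) :
    star (Fintype.linearCombination R S e) * Fintype.linearCombination R S f =
      (star e ⬝ᵥ f) • (1 : A) := by
  simp only [Fintype.linearCombination_apply, star_sum, star_smul, Finset.sum_mul_sum,
    smul_mul_smul_comm, hS.star_mul_eq_ite, smul_ite, smul_zero, Finset.sum_ite_eq,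
    Finset.mem_univ, if_true, dotProduct, Finset.sum_smul, Pi.star_apply]

end MatrixUnits

section Words

variable {R ι A : Type*} [CommRing R] [Ring A] [StarRing A] [Algebra R A] [DecidableEq ι]
  [Fintype ι] {s : ι → A}

theorem IsCuntzFamily.wordProduct_mul_star_mem_matrixUnitSpan (hs : IsCuntzFamily s)
    {μ ν : List ι} (hlen : μ.length = ν.length) {k : ℕ} (hk : μ.length ≤ k) :
    wordProduct s μ * star (wordProduct s ν) ∈
      matrixUnitSpan R (wordOfLength s k) := by
  obtain ⟨d, rfl⟩ := Nat.exists_eq_add_of_le hk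
  have hsum : wordProduct s μ * star (wordProduct s ν) =
      ∑ w : Fin d → ι, wordProduct s (μ ++ List.ofFn w) *
        star (wordProduct s (ν ++ List.ofFn w)) :=
    calc wordProduct s μ * star (wordProduct s ν)
      _ = wordProduct s μ * (∑ w, wordOfLength s d w * star (wordOfLength s d w)) *
            star (wordProduct s ν) := by
        rw [(hs.words d).sum_mul_star, mul_one]
      _ = _ := by
        simp only [wordOfLength, Finset.mul_sum, Finset.sum_mul, wordProduct_append, star_mul,
          mul_assoc]
  rw [hsum]
  refine Submodule.sum_mem _ fun w _ => ?_
  obtain ⟨p, hp⟩ := exists_ofFn_eq (μ := μ ++ List.ofFn w) (k := μ.length + d) (by simp)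
  obtain ⟨q, hq⟩ := exists_ofFn_eq (μ := ν ++ List.ofFn w) (k := μ.length + d) (by simp [hlen])
  rw [← hp, ← hq]
  exact mul_star_mem_matrixUnitSpan p q

end Words

section QuasiCommute

variable (R : Type*) {A : Type*} [CommRing R] [Ring A] [Algebra R A]

/-- Commutation up to an invertible scalar. -/
def QuasiCommute (a b : A) : Prop := ∃ c : Rˣ, a * b = c • (b * a)

variable {R} {a a' b b' : A}

namespace QuasiCommute

theorem symm (h : QuasiCommute R a b) : QuasiCommute R b a := by
  obtain ⟨c, hc⟩ := h
  exact ⟨c⁻¹, by rw [hc, inv_smul_smul]⟩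

theorem one_left (b : A) : QuasiCommute R 1 b := ⟨1, by simp⟩

theorem mul_left (h : QuasiCommute R a b) (h' : QuasiCommute R a' b) :
    QuasiCommute R (a * a') b := by
  obtain ⟨c, hc⟩ := h
  obtain ⟨d, hd⟩ := h'
  exact ⟨d * c, by rw [mul_assoc, hd, mul_smul_comm, ← mul_assoc, hc, smul_mul_assoc, smul_smul,
    mul_assoc]⟩

theorem of_mem_closure {X Y : Set A} (h : ∀ x ∈ X, ∀ y ∈ Y, QuasiCommute R x y)
    (ha : a ∈ Submonoid.closure X) (hb : b ∈ Submonoid.closure Y) : QuasiCommute R a b := by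
  have of_mem_left {a b : A} {X : Set A} (h : ∀ x ∈ X, QuasiCommute R x b)
      (ha : a ∈ Submonoid.closure X) : QuasiCommute R a b := by
    induction ha using Submonoid.closure_induction with
    | mem x hx => exact h x hx
    | one => exact one_left b
    | mul x y _ _ hx hy => exact hx.mul_left hy
  exact of_mem_left (fun x hx => (of_mem_left (fun y hy => (h x hx y hy).symm) hb).symm) ha

theorem star [StarRing R] [StarRing A] [StarModule R A] (h : QuasiCommute R a b) :
    QuasiCommute R (star a) (star b) := by
  obtain ⟨c, hc⟩ := h
  have hstar : Star.star b * Star.star a = Star.star c • (Star.star a * Star.star b) := by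
    rw [← star_mul, hc, star_smul, star_mul]
  exact symm ⟨_, hstar⟩

end QuasiCommute

variable {ι : Type*} [DecidableEq ι] [Fintype ι] [StarRing A] {s : ι → A}

theorem IsCuntzFamily.quasiCommute_star (hs : IsCuntzFamily s)
    (h : ∀ i, QuasiCommute R (s i) b) (i : ι) : QuasiCommute R (star (s i)) b := by
  choose c hc using fun k => (h k).symm
  refine ⟨c i, ?_⟩
  calc star (s i) * b
    _ = star (s i) * b * ∑ k, s k * star (s k) := by rw [hs.sum_mul_star, mul_one]
    _ = ∑ k, star (s i) * (b * s k) * star (s k) := by simp only [Finset.mul_sum, mul_assoc]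
    _ = ∑ k, c k • (star (s i) * s k * (b * star (s k))) := by
      simp only [hc, mul_smul_comm, smul_mul_assoc, mul_assoc]
    _ = c i • (b * star (s i)) := by simp [hs.star_mul_eq_ite]

end QuasiCommute

section StarMonoidClosure

open scoped Pointwise

variable {R A : Type*} [CommRing R] [Ring A] [StarRing A] [Algebra R A] {X Y : Set A}

/-- The monoid of all products of elements of `X` and their adjoints. -/
def starMonoidClosure (X : Set A) : Submonoid A := Submonoid.closure (X ∪ star X)

theorem subset_starMonoidClosure : X ⊆ starMonoidClosure X :=
  Set.subset_union_left.trans Submonoid.subset_closure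

theorem star_mem_starMonoidClosure {a : A} (ha : a ∈ starMonoidClosure X) :
    star a ∈ starMonoidClosure X := by
  induction ha using Submonoid.closure_induction with
  | mem x hx => exact Submonoid.subset_closure (hx.symm.imp_right Set.star_mem_star.mpr)
  | one => simp
  | mul x y _ _ hx hy => simpa only [star_mul] using mul_mem hy hx

theorem wordProduct_mem_starMonoidClosure {ι : Type*} (s : ι → A) (μ : List ι) :
    wordProduct s μ ∈ starMonoidClosure (Set.range s) :=
  wordProduct_mem s (fun i => subset_starMonoidClosure (Set.mem_range_self i)) μ

theorem adjoin_union_le_span_mul [StarRing R] [StarModule R A]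
    (h : ∀ a ∈ starMonoidClosure X, ∀ b ∈ starMonoidClosure Y, QuasiCommute R a b) :
    (StarAlgebra.adjoin R (X ∪ Y)).toSubalgebra.toSubmodule ≤
      Submodule.span R ((starMonoidClosure X : Set A) * (starMonoidClosure Y : Set A)) := by
  rw [StarAlgebra.adjoin_eq_span, Submodule.span_le]
  suffices hform : ∀ z ∈ Submonoid.closure (X ∪ Y ∪ star (X ∪ Y)),
      ∃ c : R, ∃ a ∈ starMonoidClosure X, ∃ b ∈ starMonoidClosure Y, z = c • (a * b) by
    intro z hz
    obtain ⟨c, a, ha, b, hb, rfl⟩ := hform z hz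
    exact Submodule.smul_mem _ c (Submodule.subset_span (Set.mul_mem_mul ha hb))
  intro z hz
  induction hz using Submonoid.closure_induction_left with
  | one => exact ⟨1, 1, one_mem _, 1, one_mem _, by simp⟩
  | mul_left x hx y _ ih =>
    obtain ⟨c, a, ha, b, hb, rfl⟩ := ih
    have hx : x ∈ starMonoidClosure X ∨ x ∈ starMonoidClosure Y := by
      rw [Set.union_star, Set.union_union_union_comm] at hx
      exact hx.imp (fun h => Submonoid.subset_closure h) fun h => Submonoid.subset_closure h
    rcases hx with hx | hx
    · exact ⟨c, x * a, mul_mem hx ha, b, hb, by rw [mul_smul_comm, mul_assoc]⟩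
    · obtain ⟨d, hd⟩ := (h a ha x hx).symm
      refine ⟨c * d, a, ha, x * b, mul_mem hx hb, ?_⟩
      rw [mul_smul_comm, ← mul_assoc, hd, smul_mul_assoc, Units.smul_def, smul_smul, mul_assoc]

theorem IsCuntzFamily.quasiCommute_of_mem_starMonoidClosure [StarRing R] [StarModule R A]
    {ι κ : Type*} [DecidableEq ι] [Fintype ι] {s : ι → A} {t : κ → A} (hs : IsCuntzFamily s)
    (h : ∀ i j, QuasiCommute R (s i) (t j)) {a b : A}
    (ha : a ∈ starMonoidClosure (Set.range s)) (hb : b ∈ starMonoidClosure (Set.range t)) :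
    QuasiCommute R a b := by
  have hstar (i : ι) (j : κ) : QuasiCommute R (star (s i)) (t j) :=
    hs.quasiCommute_star (fun i => h i j) i
  refine QuasiCommute.of_mem_closure ?_ ha hb
  rintro x (⟨i, rfl⟩ | hx) y (⟨j, rfl⟩ | hy)
  · exact h i j
  · obtain ⟨j, hj⟩ := hy
    simpa [hj] using (hstar i j).star
  · obtain ⟨i, hi⟩ := hx
    simpa [hi] using hstar i j
  · obtain ⟨i, hi⟩ := hx
    obtain ⟨j, hj⟩ := hy
    simpa [hi, hj] using (h i j).star

theorem IsCuntzFamily.eq_zero_or_eq_wordProduct_mul_star {ι : Type*} [DecidableEq ι] [Fintype ι]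
    {s : ι → A} (hs : IsCuntzFamily s) {a : A} (ha : a ∈ starMonoidClosure (Set.range s)) :
    a = 0 ∨ ∃ μ ν : List ι, a = wordProduct s μ * star (wordProduct s ν) := by
  induction ha using Submonoid.closure_induction_left with
  | one => exact Or.inr ⟨[], [], by simp⟩
  | mul_left x hx y _ ih =>
    rcases ih with rfl | ⟨μ, ν, rfl⟩
    · exact Or.inl (mul_zero x)
    rcases hx with ⟨i, rfl⟩ | ⟨i, hi⟩
    · exact Or.inr ⟨i :: μ, ν, by rw [wordProduct_cons, mul_assoc]⟩
    obtain rfl : x = star (s i) := by rw [hi, star_star]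
    rcases μ with _ | ⟨j, μ⟩
    · exact Or.inr ⟨[], ν ++ [i], by simp [wordProduct_append, wordProduct_cons]⟩
    rw [wordProduct_cons, mul_assoc (s j), ← mul_assoc]
    rcases eq_or_ne i j with rfl | hij
    · exact Or.inr ⟨μ, ν, by rw [hs.star_mul_self, one_mul]⟩
    · exact Or.inl (by rw [hs.star_mul_of_ne hij, zero_mul])

end StarMonoidClosure

section Compressor

variable {ι A : Type*}

/-- The product `s_i^k s_j`. When `s` is a Cuntz family and `i ≠ j`, this isometry compresses every
monomial of length at most `k` in `s` and `star s` to a scalar. -/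
def compressor [Monoid A] (s : ι → A) (i j : ι) (k : ℕ) : A :=
  wordProduct s (List.replicate k i ++ [j])

theorem compressor_zero [Monoid A] (s : ι → A) (i j : ι) : compressor s i j 0 = s j := by
  simp [compressor, wordProduct_cons]

theorem compressor_succ [Monoid A] (s : ι → A) (i j : ι) (k : ℕ) :
    compressor s i j (k + 1) = s i * compressor s i j k := by
  simp [compressor, List.replicate_succ, wordProduct_cons]

variable [DecidableEq ι] [Fintype ι] [Ring A] [StarRing A] {s : ι → A} {i j : ι}

theorem IsCuntzFamily.star_compressor_mul (hs : IsCuntzFamily s) (hij : i ≠ j) (a b : ℕ) :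
    star (compressor s i j a) * compressor s i j b = if a = b then 1 else 0 := by
  induction a generalizing b with
  | zero =>
    cases b with
    | zero => simp [compressor_zero, hs.star_mul_self]
    | succ b =>
      simp [compressor_zero, compressor_succ, ← mul_assoc, hs.star_mul_of_ne hij.symm]
  | succ a ih =>
    cases b with
    | zero => simp [compressor_zero, compressor_succ, mul_assoc, hs.star_mul_of_ne hij]
    | succ b =>
      rw [compressor_succ, compressor_succ, star_mul, mul_assoc, ← mul_assoc (star (s i)),
        hs.star_mul_self, one_mul, ih]
      simp

theorem IsCuntzFamily.star_compressor_mul_self (hs : IsCuntzFamily s) (hij : i ≠ j) (k : ℕ) :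
    star (compressor s i j k) * compressor s i j k = 1 := by
  rw [hs.star_compressor_mul hij, if_pos rfl]

theorem IsCuntzFamily.star_wordProduct_mul_compressor (hs : IsCuntzFamily s) (μ : List ι)
    (k : ℕ) : star (wordProduct s μ) * compressor s i j (μ.length + k) = 0 ∨
      star (wordProduct s μ) * compressor s i j (μ.length + k) = compressor s i j k := by
  induction μ with
  | nil => simp
  | cons l μ ih =>
    have hcons : star (wordProduct s (l :: μ)) * compressor s i j ((l :: μ).length + k) =
        star (wordProduct s μ) * (star (s l) * s i * compressor s i j (μ.length + k)) := by
      rw [List.length_cons, Nat.add_right_comm, compressor_succ,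
        wordProduct_cons, star_mul]
      simp only [mul_assoc]
    rw [hcons]
    rcases eq_or_ne l i with rfl | hli
    · simpa only [hs.star_mul_self, one_mul] using ih
    · simp [hs.star_mul_of_ne hli]

theorem IsCuntzFamily.eventually_compressor_mem_bot {R : Type*} [CommRing R] [Algebra R A]
    (hs : IsCuntzFamily s) (hij : i ≠ j) {a : A} (ha : a ∈ starMonoidClosure (Set.range s)) :
    ∀ᶠ k in Filter.atTop, star (compressor s i j k) * a * compressor s i j k ∈
      (⊥ : Subalgebra R A) := by
  rcases hs.eq_zero_or_eq_wordProduct_mul_star ha with rfl | ⟨μ, ν, rfl⟩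
  · simp
  filter_upwards [Filter.eventually_ge_atTop μ.length, Filter.eventually_ge_atTop ν.length]
    with k hμk hνk
  obtain ⟨d, hd⟩ := Nat.exists_eq_add_of_le hμk
  obtain ⟨e, he⟩ := Nat.exists_eq_add_of_le hνk
  have hfactor : star (compressor s i j k) * (wordProduct s μ * star (wordProduct s ν)) *
      compressor s i j k = star (star (wordProduct s μ) * compressor s i j (μ.length + d)) *
        (star (wordProduct s ν) * compressor s i j (ν.length + e)) := by
    rw [← hd, ← he, star_mul, star_star]
    simp only [mul_assoc]
  rw [hfactor]
  rcases hs.star_wordProduct_mul_compressor μ d with hμ | hμ <;>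
  rcases hs.star_wordProduct_mul_compressor ν e with hν | hν <;>
  rw [hμ, hν]
  · simp
  · simp
  · simp
  · rw [hs.star_compressor_mul hij]
    split_ifs
    · exact one_mem _
    · exact zero_mem _

end Compressor

section JointFamily

variable {R A ι κ : Type*} [CommRing R] [Ring A] [StarRing A] [Algebra R A]

theorem eventually_mem_of_mem_span {M : Type*} [AddCommGroup M] [Module R M]
    {P : ℕ → Submodule R M} {G : Set M} (hG : ∀ x ∈ G, ∀ᶠ k in Filter.atTop, x ∈ P k) {x : M}
    (hx : x ∈ Submodule.span R G) : ∀ᶠ k in Filter.atTop, x ∈ P k := by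
  induction hx using Submodule.span_induction with
  | mem x hx => exact hG x hx
  | zero => exact .of_forall fun k => zero_mem _
  | add x y _ _ hx hy => exact hx.mp (hy.mono fun k hy hx => add_mem hx hy)
  | smul c x _ hx => exact hx.mono fun k hx => Submodule.smul_mem _ c hx

theorem mul_mem_matrixUnitSpan_prod {S : ι → A} {T : κ → A}
    (h : ∀ i j l, QuasiCommute R (star (S i)) (T j * star (T l))) {a b : A}
    (ha : a ∈ matrixUnitSpan R S) (hb : b ∈ matrixUnitSpan R T) :
    a * b ∈ matrixUnitSpan R fun p : ι × κ => S p.1 * T p.2 := by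
  have hab := Submodule.mul_mem_mul ha hb
  rw [matrixUnitSpan, matrixUnitSpan, Submodule.span_mul_span] at hab
  refine Submodule.span_le.mpr ?_ hab
  rintro _ ⟨_, ⟨⟨i, i'⟩, rfl⟩, _, ⟨⟨j, j'⟩, rfl⟩, rfl⟩
  obtain ⟨c, hc⟩ := h i' j j'
  have hunit : S i * star (S i') * (T j * star (T j')) =
      (c : R) • (S i * T j * star (S i' * T j')) := by
    rw [mul_assoc, hc, star_mul, Units.smul_def, mul_smul_comm]
    simp only [mul_assoc]
  change S i * star (S i') * (T j * star (T j')) ∈ _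
  rw [hunit]
  exact Submodule.smul_mem _ _ (Submodule.subset_span ⟨((i, j), i', j'), rfl⟩)

/-- The products `s_μ t_ν` over all pairs of words `μ`, `ν` of length `k`. -/
def jointWord (s : ι → A) (t : κ → A) (k : ℕ) (p : (Fin k → ι) × (Fin k → κ)) : A :=
  wordOfLength s k p.1 * wordOfLength t k p.2

variable {s : ι → A} {t : κ → A}

theorem span_jointWord_le_adjoin [StarRing R] [StarModule R A] (k : ℕ) :
    Submodule.span R (Set.range (jointWord s t k)) ≤
      (StarAlgebra.adjoin R (Set.range s ∪ Set.range t)).toSubalgebra.toSubmodule := by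
  let N := (StarAlgebra.adjoin R (Set.range s ∪ Set.range t)).toSubalgebra.toSubsemiring.toSubmonoid
  have hs (i : ι) : s i ∈ N := StarAlgebra.subset_adjoin R _ (.inl ⟨i, rfl⟩)
  have ht (j : κ) : t j ∈ N := StarAlgebra.subset_adjoin R _ (.inr ⟨j, rfl⟩)
  refine Submodule.span_le.mpr ?_
  rintro _ ⟨p, rfl⟩
  exact mul_mem (S := Submonoid A) (wordProduct_mem s hs _) (wordProduct_mem t ht _)

variable [DecidableEq ι] [Fintype ι] [DecidableEq κ] [Fintype κ]

theorem IsCuntzFamily.jointWords (hs : IsCuntzFamily s) (ht : IsCuntzFamily t) (k : ℕ) :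
    IsCuntzFamily (jointWord s t k) :=
  (hs.words k).prod (ht.words k)

variable [StarRing R] [StarModule R A]

theorem IsCuntzFamily.mul_mem_matrixUnitSpan_jointWord (hs : IsCuntzFamily s)
    (ht : IsCuntzFamily t) (hst : ∀ i j, QuasiCommute R (s i) (t j)) {μ μ' : List ι}
    {ν ν' : List κ} (hμ : μ.length = μ'.length) (hν : ν.length = ν'.length) {k : ℕ}
    (hμk : μ.length ≤ k) (hνk : ν.length ≤ k) :
    wordProduct s μ * star (wordProduct s μ') * (wordProduct t ν * star (wordProduct t ν')) ∈
      matrixUnitSpan R (jointWord s t k) := by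
  refine mul_mem_matrixUnitSpan_prod (S := wordOfLength s k) (T := wordOfLength t k)
    (fun v w w' => ?_)
    (hs.wordProduct_mul_star_mem_matrixUnitSpan hμ hμk)
    (ht.wordProduct_mul_star_mem_matrixUnitSpan hν hνk)
  exact hs.quasiCommute_of_mem_starMonoidClosure hst
    (star_mem_starMonoidClosure (wordProduct_mem_starMonoidClosure s _))
    (mul_mem (wordProduct_mem_starMonoidClosure t _)
      (star_mem_starMonoidClosure (wordProduct_mem_starMonoidClosure t _)))

theorem IsCuntzFamily.eventually_joint_compressor_mem_bot (hs : IsCuntzFamily s)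
    (ht : IsCuntzFamily t) (hst : ∀ i j, QuasiCommute R (s i) (t j)) {i i' : ι} (hi : i ≠ i')
    {j j' : κ} (hj : j ≠ j') {p : A} (hp : p ∈ StarAlgebra.adjoin R (Set.range s ∪ Set.range t)) :
    ∀ᶠ k in Filter.atTop, star (compressor s i i' k * compressor t j j' k) * p *
      (compressor s i i' k * compressor t j j' k) ∈ (⊥ : Subalgebra R A) := by
  have hquasi {a b : A} (ha : a ∈ starMonoidClosure (Set.range s))
      (hb : b ∈ starMonoidClosure (Set.range t)) : QuasiCommute R a b :=
    hs.quasiCommute_of_mem_starMonoidClosure hst ha hb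
  let w (k : ℕ) : A := compressor s i i' k * compressor t j j' k
  refine eventually_mem_of_mem_span (P := fun k => (⊥ : Subalgebra R A).toSubmodule.comap
    (LinearMap.mulLeftRight R (star (w k), w k))) ?_
    (adjoin_union_le_span_mul (fun a ha b hb => hquasi ha hb) hp)
  rintro _ ⟨a, ha, b, hb, rfl⟩
  filter_upwards [hs.eventually_compressor_mem_bot (R := R) hi ha,
    ht.eventually_compressor_mem_bot (R := R) hj hb] with k hak hbk
  obtain ⟨x, hx⟩ := Algebra.mem_bot.mp hak
  obtain ⟨y, hy⟩ := Algebra.mem_bot.mp hbk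
  obtain ⟨c, hc⟩ := (hquasi (wordProduct_mem_starMonoidClosure s _) hb : QuasiCommute R
    (compressor s i i' k) b).symm
  have hcompress : star (w k) * (a * b) * w k = (c * x * y : R) • 1 :=
    calc star (w k) * (a * b) * w k
      _ = star (compressor t j j' k) * (star (compressor s i i' k) * a *
          (b * compressor s i i' k)) * compressor t j j' k := by
        simp only [w, star_mul, mul_assoc]
      _ = c • (star (compressor t j j' k) * (star (compressor s i i' k) * a *
          compressor s i i' k) * b * compressor t j j' k) := by
        rw [hc]
        simp only [mul_smul_comm, smul_mul_assoc, mul_assoc]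
      _ = (c * x * y : R) • 1 := by
        simp only [← hx, Algebra.algebraMap_eq_smul_one, mul_smul_comm, smul_mul_assoc, mul_one]
        rw [← hy, Algebra.algebraMap_eq_smul_one, Units.smul_def, smul_smul, smul_smul]
  change star (w k) * (a * b) * w k ∈ (⊥ : Subalgebra R A)
  rw [hcompress]
  exact Subalgebra.smul_mem _ (one_mem _) _

end JointFamily

section OrbitAverage

open MeasureTheory

theorem integral_ne_zero_of_continuous_of_nonneg {X E : Type*} [TopologicalSpace X]
    [MeasurableSpace X] [NormedAddCommGroup E] [NormedSpace ℝ E] [CompleteSpace E]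
    [PartialOrder E] [IsOrderedAddMonoid E] [IsOrderedModule ℝ E]
    [OrderClosedTopology E] {μ : Measure X} [IsFiniteMeasure μ] [μ.IsOpenPosMeasure] {f : X → E}
    (hcont : Continuous f) (hint : Integrable f μ) (hf : 0 ≤ f) {z₀ : X} (hz₀ : f z₀ ≠ 0) :
    ∫ z, f z ∂μ ≠ 0 := by
  intro hzero
  let U : Set X := {z | ‖f z - f z₀‖ < ‖f z₀‖ / 2}
  have hUopen : IsOpen U := isOpen_lt (by fun_prop) continuous_const
  have hUpos : 0 < μ.real U := by
    refine ENNReal.toReal_pos (hUopen.measure_pos μ ⟨z₀, ?_⟩).ne' (measure_ne_top μ U)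
    simpa [U] using hz₀
  have hUzero : ∫ z in U, f z ∂μ = 0 :=
    le_antisymm (hzero ▸ setIntegral_le_integral hint (.of_forall hf)) (integral_nonneg hf)
  have hconst : ∫ z in U, (f z - f z₀) ∂μ = -(μ.real U • f z₀) := by
    rw [integral_sub hint.integrableOn (integrable_const _), hUzero, setIntegral_const, zero_sub]
  have hbound := norm_setIntegral_le_of_norm_le_const (f := fun z => f z - f z₀)
    (measure_lt_top μ U) fun z (hz : z ∈ U) => hz.le
  rw [hconst, norm_neg, norm_smul, Real.norm_of_nonneg hUpos.le] at hbound
  nlinarith [norm_pos_iff.mpr hz₀]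

variable {X A : Type*} [TopologicalSpace X] [CompactSpace X] [MeasurableSpace X]
  [OpensMeasurableSpace X] [CStarAlgebra A] {α : X → A ≃⋆ₐ[ℂ] A}

theorem integrable_orbit (μ : Measure X) [IsFiniteMeasure μ]
    (hα : ∀ a, Continuous fun z => α z a) (a : A) : Integrable (fun z => α z a) μ :=
  (hα a).integrable_of_hasCompactSupport (HasCompactSupport.of_compactSpace _)

/-- The average `a ↦ ∫ α_z(a) dμ(z)` of a pointwise continuous family of automorphisms. For the
Haar measure of a compact group action this is the conditional expectation onto the fixed-point
algebra. -/
noncomputable def orbitAverage (μ : Measure X) [IsFiniteMeasure μ]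
    (hα : ∀ a, Continuous fun z => α z a) : A →ₗ[ℂ] A where
  toFun a := ∫ z, α z a ∂μ
  map_add' a b := by
    simpa only [map_add] using integral_add (integrable_orbit μ hα a) (integrable_orbit μ hα b)
  map_smul' c a := by simp only [map_smul, integral_smul, RingHom.id_apply]

section FiniteMeasure

variable {μ : Measure X} [IsFiniteMeasure μ] (hα : ∀ a, Continuous fun z => α z a)

theorem orbitAverage_apply (a : A) : orbitAverage μ hα a = ∫ z, α z a ∂μ := rfl

theorem isSelfAdjoint_orbitAverage {a : A} (ha : IsSelfAdjoint a) :
    IsSelfAdjoint (orbitAverage μ hα a) := by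
  have hstar := ((starL' ℝ : A ≃L[ℝ] A).integral_comp_comm (μ := μ) fun z => α z a).symm
  simpa [orbitAverage_apply, IsSelfAdjoint, ← map_star, ha.star_eq] using hstar

theorem orbitAverage_star_mul_self_ne_zero [μ.IsOpenPosMeasure] [Nonempty X] {x : A} (hx : x ≠ 0) :
    orbitAverage μ hα (star x * x) ≠ 0 := by
  let := CStarAlgebra.spectralOrder A
  let := CStarAlgebra.spectralOrderedRing A
  refine integral_ne_zero_of_continuous_of_nonneg (hα _) (integrable_orbit μ hα _) (fun z => ?_)
    (z₀ := Classical.arbitrary X) ?_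
  · simpa only [Pi.zero_apply, map_mul, map_star] using star_mul_self_nonneg (α z x)
  · rwa [Ne, EmbeddingLike.map_eq_zero_iff, CStarRing.star_mul_self_eq_zero_iff]

end FiniteMeasure

theorem norm_orbitAverage_le (μ : Measure X) [IsProbabilityMeasure μ]
    (hα : ∀ a, Continuous fun z => α z a) (a : A) : ‖orbitAverage μ hα a‖ ≤ ‖a‖ := by
  simpa [orbitAverage_apply] using norm_integral_le_of_norm_le_const (μ := μ) (f := fun z => α z a)
    (.of_forall fun z => (StarAlgEquiv.norm_map (α z) a).le)

end OrbitAverage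

theorem continuous_orbit_of_topologicalClosure_adjoin_eq_top {X A : Type*} [TopologicalSpace X]
    [CStarAlgebra A] {α : X → A ≃⋆ₐ[ℂ] A} {G : Set A}
    (hG : (StarAlgebra.adjoin ℂ G).topologicalClosure = ⊤)
    (hα : ∀ g ∈ G, Continuous fun z => α z g) (a : A) : Continuous fun z => α z a := by
  have hadjoin {p : A} (hp : p ∈ StarAlgebra.adjoin ℂ G) : Continuous fun z => α z p := by
    induction hp using StarAlgebra.adjoin_induction with
    | mem g hg => exact hα g hg
    | algebraMap c => simpa only [AlgHomClass.commutes] using continuous_const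
    | add a b _ _ ha hb => simpa only [map_add] using Continuous.fun_add ha hb
    | mul a b _ _ ha hb => simpa only [map_mul] using Continuous.fun_mul ha hb
    | star a _ ha => simpa only [map_star] using ha.star
  refine continuous_of_uniform_approx_of_continuous fun u hu => ?_
  obtain ⟨ε, hε, hεu⟩ := Metric.mem_uniformity_dist.mp hu
  have ha : a ∈ closure (StarAlgebra.adjoin ℂ G : Set A) :=
    (hG ▸ StarSubalgebra.mem_top : a ∈ (StarAlgebra.adjoin ℂ G).topologicalClosure)
  obtain ⟨p, hp, hap⟩ := Metric.mem_closure_iff.mp ha ε hε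
  exact ⟨fun z => α z p, hadjoin hp, fun z => hεu ((StarAlgEquiv.isometry (α z)).dist_eq a p ▸ hap)⟩

section Spectral

open MeasureTheory

variable {X A : Type*} [CStarAlgebra A] {α : X → A ≃⋆ₐ[ℂ] A}

/-- The elements on which the family `α` of automorphisms acts by the scalar function `χ`. -/
def spectralSubspace (α : X → A ≃⋆ₐ[ℂ] A) (χ : X → Circle) : Submodule ℂ A where
  carrier := {a | ∀ z, α z a = (χ z : ℂ) • a}
  add_mem' ha hb z := by rw [map_add, ha z, hb z, smul_add]
  zero_mem' z := by rw [map_zero, smul_zero]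
  smul_mem' c a ha z := by rw [map_smul, ha z, smul_comm]

variable {χ ψ : X → Circle} {a b : A}

theorem mem_spectralSubspace : a ∈ spectralSubspace α χ ↔ ∀ z, α z a = (χ z : ℂ) • a := Iff.rfl

theorem one_mem_spectralSubspace : (1 : A) ∈ spectralSubspace α 1 := fun z => by simp

theorem mul_mem_spectralSubspace (ha : a ∈ spectralSubspace α χ) (hb : b ∈ spectralSubspace α ψ) :
    a * b ∈ spectralSubspace α (χ * ψ) := fun z => by
  rw [map_mul, ha z, hb z, smul_mul_smul_comm, Pi.mul_apply, Circle.coe_mul]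

theorem star_mem_spectralSubspace (ha : a ∈ spectralSubspace α χ) :
    star a ∈ spectralSubspace α χ⁻¹ := fun z => by
  rw [map_star, ha z, star_smul, Pi.inv_apply, Circle.coe_inv_eq_conj, starRingEnd_apply]

theorem wordProduct_mem_spectralSubspace {ι : Type*} {s : ι → A}
    (hs : ∀ i, s i ∈ spectralSubspace α χ) (μ : List ι) :
    wordProduct s μ ∈ spectralSubspace α (χ ^ μ.length) := by
  induction μ with
  | nil => simpa using one_mem_spectralSubspace
  | cons i μ ih =>
    simpa only [wordProduct_cons, List.length_cons, pow_succ'] using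
      mul_mem_spectralSubspace (hs i) ih

variable [TopologicalSpace X] [CompactSpace X] [MeasurableSpace X] [OpensMeasurableSpace X]
  {μ : Measure X} [IsFiniteMeasure μ] (hα : ∀ a, Continuous fun z => α z a)

theorem orbitAverage_of_mem_spectralSubspace (ha : a ∈ spectralSubspace α χ) :
    orbitAverage μ hα a = (∫ z, (χ z : ℂ) ∂μ) • a := by
  simp only [orbitAverage_apply, mem_spectralSubspace.mp ha, integral_smul_const]

theorem orbitAverage_star_mul_mul (ha : a ∈ spectralSubspace α χ) (x : A) :
    orbitAverage μ hα (star a * x * a) = star a * orbitAverage μ hα x * a := by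
  have hfixed (z : X) : α z (star a * x * a) = star a * α z x * a := by
    rw [map_mul, map_mul, map_star, ha z, star_smul, smul_mul_assoc, smul_mul_smul_comm,
      ← starRingEnd_apply, Complex.conj_mul', Circle.norm_coe]
    simp
  have hint := integrable_orbit μ hα x
  simp only [orbitAverage_apply, hfixed]
  rw [integral_mul_const_of_integrable (hint.const_mul _), integral_const_mul_of_integrable hint]

theorem star_mul_mul_eq_of_mem_bot {μ : Measure X} [IsProbabilityMeasure μ]
    (hα : ∀ a, Continuous fun z => α z a) (ha : a ∈ spectralSubspace α χ) {x : A}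
    (hbot : star a * x * a ∈ (⊥ : Subalgebra ℂ A)) :
    star a * x * a = star a * orbitAverage μ hα x * a := by
  obtain ⟨d, hd⟩ := Algebra.mem_bot.mp hbot
  rw [← orbitAverage_star_mul_mul hα ha, ← hd, Algebra.algebraMap_eq_smul_one, map_smul,
    orbitAverage_of_mem_spectralSubspace hα one_mem_spectralSubspace]
  simp

end Spectral

section Torus

open MeasureTheory AddCircle

instance isProbabilityMeasure_volume_unitAddCircle :
    IsProbabilityMeasure (volume : Measure UnitAddCircle) :=
  ⟨UnitAddCircle.measure_univ⟩

theorem integral_toCircle_zpow (n : ℤ) :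
    ∫ z : UnitAddCircle, ((toCircle z ^ n : Circle) : ℂ) = if n = 0 then 1 else 0 := by
  have h := congrFun (fourierCoeff_fourier (T := 1) n) 0
  simpa [fourierCoeff, Pi.single_apply, eq_comm, integral_haarAddCircle, toCircle_zsmul] using h

theorem integral_toCircle_zpow_mul_zpow (p q : ℤ) :
    ∫ z : UnitAddCircle × UnitAddCircle, ((toCircle z.1 ^ p * toCircle z.2 ^ q : Circle) : ℂ) =
      if p = 0 ∧ q = 0 then 1 else 0 := by
  simp only [Circle.coe_mul, Measure.volume_eq_prod]
  rw [integral_prod_mul (fun z : UnitAddCircle => ((toCircle z ^ p : Circle) : ℂ))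
    (fun z : UnitAddCircle => ((toCircle z ^ q : Circle) : ℂ)),
    integral_toCircle_zpow, integral_toCircle_zpow, ite_and]
  split_ifs <;> simp

end Torus

section Isometry

theorem star_mul_mul_mul_eq_one {M : Type*} [Monoid M] [StarMul M] {a b : M}
    (ha : star a * a = 1) (hb : star b * b = 1) : star (a * b) * (a * b) = 1 := by
  rw [star_mul, mul_assoc, ← mul_assoc (star a), ha, one_mul, hb]

theorem norm_star_mul_mul_le {A : Type*} [CStarAlgebra A] {u : A} (hu : star u * u = 1) (x : A) :
    ‖star u * x * u‖ ≤ ‖x‖ := by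
  nontriviality A
  have hnorm : ‖u‖ = 1 := by
    have h := CStarRing.norm_star_mul_self (x := u)
    rw [hu, CStarRing.norm_one] at h
    nlinarith [norm_nonneg u]
  calc ‖star u * x * u‖ ≤ ‖star u‖ * ‖x‖ * ‖u‖ := norm_mul₃_le
    _ = ‖x‖ := by rw [norm_star, hnorm, one_mul, mul_one]

theorem isUnit_of_norm_sub_smul_one_lt {𝕜 A : Type*} [NormedField 𝕜] [NormedRing A]
    [NormedAlgebra 𝕜 A] [CompleteSpace A] [NormOneClass A] {a : A} {c : 𝕜}
    (h : ‖a - c • 1‖ < ‖c‖) : IsUnit a := by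
  by_contra ha
  have hspec : -c ∈ spectrum 𝕜 (a - c • 1) := by
    rwa [spectrum.mem_iff, Algebra.algebraMap_eq_smul_one, neg_smul, neg_sub_left,
      sub_add_cancel, IsUnit.neg_iff]
  exact (norm_neg c ▸ spectrum.norm_le_norm_of_mem hspec).not_gt h

theorem exists_isSelfAdjoint_norm_sub_lt {A : Type*} [CStarAlgebra A] {S : StarSubalgebra ℂ A}
    (hS : S.topologicalClosure = ⊤) {h : A} (hh : IsSelfAdjoint h) {ε : ℝ} (hε : 0 < ε) :
    ∃ p ∈ S, IsSelfAdjoint p ∧ ‖h - p‖ < ε := by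
  have hcl : h ∈ closure (S : Set A) :=
    (hS ▸ StarSubalgebra.mem_top : h ∈ S.topologicalClosure)
  obtain ⟨p, hp, hhp⟩ := Metric.mem_closure_iff.mp hcl ε hε
  refine ⟨realPart p, ?_, (realPart p).2, ?_⟩
  · rw [realPart_apply_coe, ← Complex.coe_smul]
    exact S.smul_mem (add_mem hp (star_mem hp)) _
  · calc ‖h - realPart p‖ = ‖realPart (h - p)‖ := by simp [hh.coe_realPart]
      _ ≤ ‖h - p‖ := realPart.norm_le (h - p)
      _ < ε := by rwa [← dist_eq_norm]

theorem exists_unit_eigenvector {𝕜 ι : Type*} [RCLike 𝕜] [Fintype ι] [DecidableEq ι]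
    {M : Matrix ι ι 𝕜} {c : 𝕜} (hc : c ∈ spectrum 𝕜 M) :
    ∃ e : ι → 𝕜, star e ⬝ᵥ e = 1 ∧ M.mulVec e = c • e := by
  rw [← Matrix.spectrum_toLin', ← Module.End.hasEigenvalue_iff_mem_spectrum] at hc
  obtain ⟨f, hf⟩ := hc.exists_hasEigenvector
  have hMf : M.mulVec f = c • f := hf.apply_eq_smul
  let f₂ : EuclideanSpace 𝕜 ι := WithLp.toLp 2 f
  have hf₂ : f₂ ≠ 0 := fun h => hf.2 (by simpa [f₂] using h)
  have hinner := inner_self_eq_norm_sq_to_K (𝕜 := 𝕜) ((‖f₂‖ : 𝕜)⁻¹ • f₂)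
  rw [norm_smul_inv_norm hf₂, EuclideanSpace.inner_eq_star_dotProduct, dotProduct_comm] at hinner
  exact ⟨(‖f₂‖ : 𝕜)⁻¹ • f, by simpa using hinner, by rw [Matrix.mulVec_smul, hMf, smul_comm]⟩

theorem IsCuntzFamily.exists_isometry_star_mul_mul_eq_smul_one {A ι : Type*} [CStarAlgebra A]
    [Nontrivial A] [DecidableEq ι] [Fintype ι] {S : ι → A} (hS : IsCuntzFamily S) {p : A}
    (hp : IsSelfAdjoint p) (hpS : p ∈ matrixUnitSpan ℂ S) :
    ∃ v ∈ Submodule.span ℂ (Set.range S), star v * v = 1 ∧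
      ∃ c : ℂ, ‖c‖ = ‖p‖ ∧ star v * p * v = c • 1 := by
  obtain ⟨M, rfl⟩ := hS.exists_matrixHom_eq hpS
  obtain ⟨c, hc, hcnorm⟩ := spectrum.exists_nnnorm_eq_spectralRadius (hS.matrixHom M)
  rw [hp.spectralRadius_eq_nnnorm, ENNReal.coe_inj] at hcnorm
  obtain ⟨e, he, hMe⟩ := exists_unit_eigenvector (AlgHom.spectrum_apply_subset _ M hc)
  have hisometry :
      star (Fintype.linearCombination ℂ S e) * Fintype.linearCombination ℂ S e = 1 := by
    rw [hS.star_linearCombination_mul, he, one_smul]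
  refine ⟨Fintype.linearCombination ℂ S e, ?_, hisometry, c, congrArg NNReal.toReal hcnorm, ?_⟩
  · rw [← Fintype.range_linearCombination]
    exact LinearMap.mem_range_self _ e
  · rw [mul_assoc, hS.matrixHom_mul_linearCombination, hMe, map_smul, mul_smul_comm, hisometry]

end Isometry

section GaugeAction

open MeasureTheory AddCircle

variable {A ι κ : Type*} [CStarAlgebra A] {s : ι → A} {t : κ → A}
  {α : UnitAddCircle × UnitAddCircle → A ≃⋆ₐ[ℂ] A}

/-- The family `α` acts on `s` and `t` by the two coordinates of the torus. -/
structure IsGaugeFamily (α : UnitAddCircle × UnitAddCircle → A ≃⋆ₐ[ℂ] A) (s : ι → A) (t : κ → A) :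
    Prop where
  left_mem (i : ι) : s i ∈ spectralSubspace α fun z => toCircle z.1
  right_mem (j : κ) : t j ∈ spectralSubspace α fun z => toCircle z.2

theorem IsGaugeFamily.continuous (hgauge : IsGaugeFamily α s t)
    (hgen : (StarAlgebra.adjoin ℂ (Set.range s ∪ Set.range t)).topologicalClosure = ⊤) (a : A) :
    Continuous fun z => α z a := by
  refine continuous_orbit_of_topologicalClosure_adjoin_eq_top hgen ?_ a
  rintro _ (⟨i, rfl⟩ | ⟨j, rfl⟩)
  · simp only [mem_spectralSubspace.mp (hgauge.left_mem i)]
    fun_prop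
  · simp only [mem_spectralSubspace.mp (hgauge.right_mem j)]
    fun_prop

theorem IsGaugeFamily.wordProduct_mul_wordProduct_mem (hgauge : IsGaugeFamily α s t) (μ : List ι)
    (ν : List κ) : wordProduct s μ * wordProduct t ν ∈ spectralSubspace α
      ((fun z => toCircle z.1) ^ μ.length * (fun z => toCircle z.2) ^ ν.length) :=
  mul_mem_spectralSubspace (wordProduct_mem_spectralSubspace hgauge.left_mem μ)
    (wordProduct_mem_spectralSubspace hgauge.right_mem ν)

theorem IsGaugeFamily.span_jointWord_le_spectralSubspace (hgauge : IsGaugeFamily α s t) (k : ℕ) :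
    Submodule.span ℂ (Set.range (jointWord s t k)) ≤ spectralSubspace α
      ((fun z => toCircle z.1) ^ k * (fun z => toCircle z.2) ^ k) := by
  refine Submodule.span_le.mpr ?_
  rintro _ ⟨p, rfl⟩
  simpa [jointWord, wordOfLength] using
    hgauge.wordProduct_mul_wordProduct_mem (List.ofFn p.1) (List.ofFn p.2)

variable (hα : ∀ a, Continuous fun z => α z a)

theorem IsGaugeFamily.orbitAverage_monomial (hgauge : IsGaugeFamily α s t) (μ μ' : List ι)
    (ν ν' : List κ) :
    orbitAverage volume hα
        (wordProduct s μ * star (wordProduct s μ') * (wordProduct t ν * star (wordProduct t ν'))) =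
      if μ.length = μ'.length ∧ ν.length = ν'.length then
        wordProduct s μ * star (wordProduct s μ') * (wordProduct t ν * star (wordProduct t ν'))
      else 0 := by
  have hs (μ : List ι) := wordProduct_mem_spectralSubspace hgauge.left_mem μ
  have ht (ν : List κ) := wordProduct_mem_spectralSubspace hgauge.right_mem ν
  rw [orbitAverage_of_mem_spectralSubspace hα (mul_mem_spectralSubspace
    (mul_mem_spectralSubspace (hs μ) (star_mem_spectralSubspace (hs μ')))
    (mul_mem_spectralSubspace (ht ν) (star_mem_spectralSubspace (ht ν'))))]
  have hint := integral_toCircle_zpow_mul_zpow (μ.length - μ'.length) (ν.length - ν'.length)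
  simp only [zpow_sub, zpow_natCast, sub_eq_zero, Nat.cast_inj] at hint
  simp only [Pi.mul_apply, Pi.inv_apply, Pi.pow_apply, hint, ite_smul, one_smul, zero_smul]

variable [DecidableEq ι] [Fintype ι] [DecidableEq κ] [Fintype κ]

theorem IsGaugeFamily.eventually_orbitAverage_mem_matrixUnitSpan (hgauge : IsGaugeFamily α s t)
    (hs : IsCuntzFamily s) (ht : IsCuntzFamily t) (hst : ∀ i j, QuasiCommute ℂ (s i) (t j))
    {p : A} (hp : p ∈ StarAlgebra.adjoin ℂ (Set.range s ∪ Set.range t)) :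
    ∀ᶠ k in Filter.atTop, orbitAverage volume hα p ∈ matrixUnitSpan ℂ (jointWord s t k) := by
  refine eventually_mem_of_mem_span (R := ℂ)
    (P := fun k => (matrixUnitSpan ℂ (jointWord s t k)).comap (orbitAverage volume hα)) ?_
    (adjoin_union_le_span_mul
      (fun a ha b hb => hs.quasiCommute_of_mem_starMonoidClosure hst ha hb) hp)
  rintro _ ⟨a, ha, b, hb, rfl⟩
  simp only [Submodule.mem_comap]
  rcases hs.eq_zero_or_eq_wordProduct_mul_star ha with rfl | ⟨μ, μ', rfl⟩
  · simp
  rcases ht.eq_zero_or_eq_wordProduct_mul_star hb with rfl | ⟨ν, ν', rfl⟩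
  · simp
  rw [hgauge.orbitAverage_monomial hα]
  split_ifs with hlen
  · filter_upwards [Filter.eventually_ge_atTop μ.length, Filter.eventually_ge_atTop ν.length]
      with k hμk hνk
    exact hs.mul_mem_matrixUnitSpan_jointWord ht hst hlen.1 hlen.2 hμk hνk
  · simp

theorem IsGaugeFamily.exists_isometry_star_mul_mul_eq_smul_one [Nontrivial A] [Nontrivial ι]
    [Nontrivial κ] (hgauge : IsGaugeFamily α s t) (hs : IsCuntzFamily s) (ht : IsCuntzFamily t)
    (hst : ∀ i j, QuasiCommute ℂ (s i) (t j)) {p : A} (hp : IsSelfAdjoint p)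
    (hpadj : p ∈ StarAlgebra.adjoin ℂ (Set.range s ∪ Set.range t)) :
    ∃ u, star u * u = 1 ∧ ∃ c : ℂ, ‖c‖ = ‖orbitAverage volume hα p‖ ∧ star u * p * u = c • 1 := by
  obtain ⟨k, hk⟩ := (hgauge.eventually_orbitAverage_mem_matrixUnitSpan hα hs ht hst hpadj).exists
  obtain ⟨v, hv, hvv, c, hc, hvc⟩ := (hs.jointWords ht k).exists_isometry_star_mul_mul_eq_smul_one
    (isSelfAdjoint_orbitAverage hα hp) hk
  have hvP : v ∈ StarAlgebra.adjoin ℂ (Set.range s ∪ Set.range t) :=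
    span_jointWord_le_adjoin k hv
  obtain ⟨i, i', hi⟩ := exists_pair_ne ι
  obtain ⟨j, j', hj⟩ := exists_pair_ne κ
  obtain ⟨l, hl⟩ := (hs.eventually_joint_compressor_mem_bot ht hst hi hj
    (mul_mem (mul_mem (star_mem hvP) hpadj) hvP)).exists
  set w := compressor s i i' l * compressor t j j' l
  have hww : star w * w = 1 :=
    star_mul_mul_mul_eq_one (hs.star_compressor_mul_self hi l) (ht.star_compressor_mul_self hj l)
  refine ⟨v * w, star_mul_mul_mul_eq_one hvv hww, c, hc, ?_⟩
  calc star (v * w) * p * (v * w)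
    _ = star w * (star v * p * v) * w := by simp only [star_mul, mul_assoc]
    _ = star w * orbitAverage volume hα (star v * p * v) * w :=
      star_mul_mul_eq_of_mem_bot hα (hgauge.wordProduct_mul_wordProduct_mem _ _) hl
    _ = star w * (c • 1) * w := by
      rw [orbitAverage_star_mul_mul hα (hgauge.span_jointWord_le_spectralSubspace k hv), hvc]
    _ = c • 1 := by rw [mul_smul_comm, mul_one, smul_mul_assoc, hww]

theorem IsGaugeFamily.exists_mul_mul_eq_one [Nontrivial ι] [Nontrivial κ]
    (hgauge : IsGaugeFamily α s t) (hs : IsCuntzFamily s) (ht : IsCuntzFamily t)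
    (hst : ∀ i j, QuasiCommute ℂ (s i) (t j))
    (hgen : (StarAlgebra.adjoin ℂ (Set.range s ∪ Set.range t)).topologicalClosure = ⊤) {x : A}
    (hx : x ≠ 0) : ∃ a b : A, a * x * b = 1 := by
  have : Nontrivial A := ⟨x, 0, hx⟩
  have hα := hgauge.continuous hgen
  let E := orbitAverage volume hα
  have hE : 0 < ‖E (star x * x)‖ := norm_pos_iff.mpr (orbitAverage_star_mul_self_ne_zero hα hx)
  obtain ⟨p, hp, hpsa, hxp⟩ :=
    exists_isSelfAdjoint_norm_sub_lt hgen (IsSelfAdjoint.star_mul_self x) (half_pos hE)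
  obtain ⟨u, huu, c, hc, huc⟩ :=
    hgauge.exists_isometry_star_mul_mul_eq_smul_one hα hs ht hst hpsa hp
  have hEp : ‖star x * x - p‖ < ‖E p‖ := by
    have hsub := norm_sub_norm_le (E (star x * x)) (E p)
    rw [← map_sub] at hsub
    linarith [norm_orbitAverage_le volume hα (star x * x - p)]
  have hunit : IsUnit (star u * (star x * x) * u) := by
    refine isUnit_of_norm_sub_smul_one_lt (c := c) ?_
    calc ‖star u * (star x * x) * u - c • 1‖
      _ = ‖star u * (star x * x - p) * u‖ := by rw [← huc, mul_sub, sub_mul]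
      _ ≤ ‖star x * x - p‖ := norm_star_mul_mul_le huu _
      _ < ‖c‖ := hc ▸ hEp
  obtain ⟨b, hb⟩ := hunit.exists_left_inv
  exact ⟨b * (star u * star x), u, by simpa only [mul_assoc] using hb⟩

end GaugeAction

theorem stmt_18 {A : Type*} [NormedRing A] [StarRing A] [CStarRing A]
    [NormedAlgebra ℂ A] [StarModule ℂ A] [CompleteSpace A]
    {n m : ℕ} (hn : 2 ≤ n) (hm : 2 ≤ m)
    (Θ : Fin n → Fin m → ℂ) (hΘ : ∀ i j, ‖Θ i j‖ = 1)
    (s : Fin n → A) (t : Fin m → A)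
    (hs : ∀ i j : Fin n, star (s i) * s j = if i = j then 1 else 0)
    (ht : ∀ r l : Fin m, star (t r) * t l = if r = l then 1 else 0)
    (hQ : ∑ i : Fin n, s i * star (s i) = 1)
    (hP : ∑ j : Fin m, t j * star (t j) = 1)
    (hcomm : ∀ (i : Fin n) (j : Fin m), s i * t j = Θ i j • (t j * s i))
    (hgen : (StarAlgebra.adjoin ℂ (Set.range s ∪ Set.range t)).topologicalClosure = ⊤)
    (hgauge : ∀ ζ ξ : ℂ, ‖ζ‖ = 1 → ‖ξ‖ = 1 →
      ∃ ρ : A ≃⋆ₐ[ℂ] A, (∀ i, ρ (s i) = ζ • s i) ∧ (∀ j, ρ (t j) = ξ • t j)) :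
    ∀ x : A, x ≠ 0 → ∃ a b : A, a * x * b = 1 := by
  let : CStarAlgebra A := { }
  intro x hx
  have : Nontrivial (Fin n) := Fin.nontrivial_iff_two_le.mpr hn
  have : Nontrivial (Fin m) := Fin.nontrivial_iff_two_le.mpr hm
  have hst (i : Fin n) (j : Fin m) : QuasiCommute ℂ (s i) (t j) :=
    ⟨Units.mk0 (Θ i j) (norm_ne_zero_iff.mp (by simp [hΘ])), hcomm i j⟩
  choose α hαs hαt using fun z : UnitAddCircle × UnitAddCircle =>
    hgauge (AddCircle.toCircle z.1) (AddCircle.toCircle z.2) (Circle.norm_coe _) (Circle.norm_coe _)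
  have hgaugeFamily : IsGaugeFamily α s t := ⟨fun i z => hαs z i, fun j z => hαt z j⟩
  exact hgaugeFamily.exists_mul_mul_eq_one ⟨hs, hQ⟩ ⟨ht, hP⟩ hst hgen hx
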